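/- Let g ≥ 2 and let Σ_g be the closed orientable surface of genus g. Then the fundamental group π₁(Σ_g) = ⟨a₁,b₁,…,a_g,b_g | [a₁,b₁]⋯[a_g,b_g]⟩ has the property that for any element r ∈ π₁(Σ_g) not conjugate into the free subgroup A = ⟨a₁,b₁⟩ nor into B = ⟨a₂,b₂,…,a_g,b_g⟩, both A and B embed canonically into π₁(Σ_g)/⟨⟨r⟩⟩. -/

import Mathlib

/-- The surface relator `[a₁,b₁]⋯[a_g,b_g]` in the free group on `Fin g × Bool`,
where `(i, false)` is `aᵢ` and `(i, true)` is `bᵢ`. -/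
def surfaceRel (g : ℕ) : FreeGroup (Fin g × Bool) :=
  (List.ofFn fun i : Fin g =>
    (FreeGroup.of (i, false))⁻¹ * (FreeGroup.of (i, true))⁻¹ *
      FreeGroup.of (i, false) * FreeGroup.of (i, true)).prod

/-!
If `r` has exponent sum zero in a generator `t` that acts on the remaining ones by a shift, then
`r` is a word in the conjugates of the other generators by powers of `t`, and Magnus' descent
exhibits the quotient by `r` as an HNN extension of a quotient by a shorter word. In a free group
the case of a nonzero exponent is settled by solving the equation `r = 1` in finite `p`-groups.
In the surface group a handle `t, b` satisfies `t⁻¹ * b * t = b * W` with `W` free of `t` and `b`.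
Replacing `t` by `b ^ k * t` or `b` by `t ^ k * b` preserves this shape, so Euclid's algorithm
makes the exponent of `t` in `r` zero.
-/

universe u v

section Unitriangular

variable {n : ℕ} {R : Type*} [CommRing R]

/-- Upper unitriangular square matrices. -/
def IsUnitriangular (M : Matrix (Fin n) (Fin n) R) : Prop :=
  ∀ ⦃i j⦄, j ≤ i → M i j = (1 : Matrix (Fin n) (Fin n) R) i j

theorem IsUnitriangular.one : IsUnitriangular (1 : Matrix (Fin n) (Fin n) R) := fun _ _ _ => rfl

theorem IsUnitriangular.mul {M N : Matrix (Fin n) (Fin n) R} (hM : IsUnitriangular M)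
    (hN : IsUnitriangular N) : IsUnitriangular (M * N) := by
  intro i j hji
  rw [Matrix.mul_apply, Finset.sum_eq_single i, hM le_rfl, hN hji, Matrix.one_apply_eq, one_mul]
  · intro k _ hki
    rcases lt_or_gt_of_ne hki with hk | hk
    · rw [hM hk.le, Matrix.one_apply_ne hki.symm, zero_mul]
    · have hjk : j < k := hji.trans_lt hk
      rw [hN hjk.le, Matrix.one_apply_ne hjk.ne', mul_zero]
  · simp

theorem IsUnitriangular.sub_one_pow_eq_zero {M : Matrix (Fin n) (Fin n) R}
    (hM : IsUnitriangular M) : (M - 1) ^ n = 0 := by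
  have htri : M.IsUpperTriangular := fun i j hji => by
    exact (hM (le_of_lt hji)).trans (Matrix.one_apply_ne (ne_of_gt hji))
  have hdiag (i : Fin n) : M i i = 1 := by rw [hM le_rfl, Matrix.one_apply_eq]
  simpa [Matrix.charpoly_of_isUpperTriangular M htri, hdiag] using M.aeval_self_charpoly

theorem IsUnitriangular.pow_char_pow_eq_one (p : ℕ) [hp : Fact p.Prime] [CharP R p]
    {M : Matrix (Fin n) (Fin n) R} (hM : IsUnitriangular M) : M ^ p ^ n = 1 := by
  have hnil : (M - 1) ^ p ^ n = 0 :=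
    pow_eq_zero_of_le (Nat.lt_pow_self hp.out.one_lt).le hM.sub_one_pow_eq_zero
  rcases isEmpty_or_nonempty (Fin n) with _ | _
  · exact Subsingleton.elim _ _
  · rwa [sub_pow_char_pow_of_commute p n (Commute.one_right M), one_pow, sub_eq_zero] at hnil

theorem isPGroup_range_of_isUnitriangular (p : ℕ) [Fact p.Prime] [CharP R p] {G : Type*} [Group G]
    (f : G →* (Matrix (Fin n) (Fin n) R)ˣ) (hf : ∀ g, IsUnitriangular (f g).val) :
    IsPGroup p f.range := by
  rw [isPGroup_iff_pow_pow_eq_one]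
  rintro ⟨_, g, rfl⟩
  exact ⟨n, Subtype.ext (Units.ext ((hf g).pow_char_pow_eq_one p))⟩

end Unitriangular

section Syllables

variable {α : Type*}

theorem exists_eq_prod_syllables (w : FreeGroup α) :
    ∃ (n : ℕ) (c : Fin n → α) (k : Fin n → ℤ),
      w = (List.ofFn fun m => FreeGroup.of (c m) ^ k m).prod ∧ (∀ m, k m ≠ 0) ∧
        ∀ m m' : Fin n, (m' : ℕ) = m + 1 → c m ≠ c m' := by
  classical
  let toCoprod : FreeGroup α →* Monoid.CoprodI fun _ : α => Multiplicative ℤ :=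
    FreeGroup.lift fun a => Monoid.CoprodI.of (i := a) (Multiplicative.ofAdd 1)
  let ofCoprod : Monoid.CoprodI (fun _ : α => Multiplicative ℤ) →* FreeGroup α :=
    Monoid.CoprodI.lift fun a => zpowersHom _ (FreeGroup.of a)
  have hinv : ofCoprod (toCoprod w) = w := by
    have : ofCoprod.comp toCoprod = MonoidHom.id _ := by ext; simp [toCoprod, ofCoprod]
    exact DFunLike.congr_fun this w
  let W : Monoid.CoprodI.Word fun _ : α => Multiplicative ℤ :=
    Monoid.CoprodI.Word.equiv (toCoprod w)
  have hW : W.prod = toCoprod w := Monoid.CoprodI.Word.equiv.symm_apply_apply _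
  refine ⟨W.toList.length, fun m => W.toList[m].1, fun m => W.toList[m].2.toAdd, ?_, ?_, ?_⟩
  · have hget : (List.ofFn fun m : Fin W.toList.length => W.toList[m]) = W.toList :=
      List.ofFn_getElem
    calc w = ofCoprod W.prod := by rw [hW, hinv]
      _ = ((List.ofFn fun m : Fin W.toList.length => W.toList[m]).map fun s =>
            FreeGroup.of s.1 ^ s.2.toAdd).prod := by
        rw [hget, Monoid.CoprodI.Word.prod, map_list_prod, List.map_map]
        simp [Function.comp_def, ofCoprod]
      _ = _ := by rw [List.map_ofFn]; rfl
  · exact fun m hm => W.ne_one _ (List.getElem_mem m.2) hm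
  · rintro m ⟨_, hm'⟩ rfl
    exact List.isChain_iff_getElem.1 W.chain_ne m hm'

end Syllables

section StepMatrix

/-- The homomorphism `k ↦ 1 + k • A` into the units of a ring, for `A` of square zero. -/
def oneAddZSMulHom {R : Type*} [Ring R] (A : R) (hA : A * A = 0) : Multiplicative ℤ →* Rˣ :=
  MonoidHom.toHomUnits
    { toFun := fun k => 1 + k.toAdd • A
      map_one' := by simp
      map_mul' := fun k l => by
        simp only [toAdd_mul, add_smul, add_mul, mul_add, one_mul, mul_one, smul_mul_smul_comm, hA,
          smul_zero, add_zero, add_assoc, add_comm (k.toAdd • A)] }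

theorem val_oneAddZSMulHom {R : Type*} [Ring R] (A : R) (hA : A * A = 0) (k : ℤ) :
    (oneAddZSMulHom A hA (Multiplicative.ofAdd k)).val = 1 + k • A := rfl

variable {α R : Type*} [CommRing R] {n : ℕ}

open scoped Classical in
/-- The matrix of the path `0 → 1 → ⋯ → n` whose `m`-th edge is labelled by `c m`, restricted to
the edges labelled by `x`. -/
noncomputable def stepMatrix (R : Type*) [CommRing R] (c : Fin n → α) (x : α) :
    Matrix (Fin (n + 1)) (Fin (n + 1)) R :=
  Matrix.of fun i j => if ∃ m : Fin n, i = m.castSucc ∧ j = m.succ ∧ c m = x then 1 else 0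

theorem exists_of_stepMatrix_ne_zero {c : Fin n → α} {x : α} {i j : Fin (n + 1)}
    (h : stepMatrix R c x i j ≠ 0) : ∃ m : Fin n, i = m.castSucc ∧ j = m.succ ∧ c m = x := by
  by_contra hm
  exact h (if_neg hm)

theorem stepMatrix_castSucc_succ (c : Fin n → α) (m : Fin n) :
    stepMatrix R c (c m) m.castSucc m.succ = 1 :=
  if_pos ⟨m, rfl, rfl, rfl⟩

theorem stepMatrix_mul_self {c : Fin n → α} (hc : ∀ m m' : Fin n, (m' : ℕ) = m + 1 → c m ≠ c m')
    (x : α) : stepMatrix R c x * stepMatrix R c x = 0 := by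
  ext i k
  rw [Matrix.mul_apply, Matrix.zero_apply]
  refine Finset.sum_eq_zero fun j _ => ?_
  by_contra h
  obtain ⟨m, -, rfl, rfl⟩ := exists_of_stepMatrix_ne_zero (left_ne_zero_of_mul h)
  obtain ⟨m', hm, -, hx⟩ := exists_of_stepMatrix_ne_zero (right_ne_zero_of_mul h)
  exact hc m m' (by simpa using (congrArg Fin.val hm).symm) hx.symm

theorem isUnitriangular_one_add_zsmul_stepMatrix (c : Fin n → α) (x : α) (k : ℤ) :
    IsUnitriangular (1 + k • stepMatrix R c x) := by
  intro i j hji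
  suffices stepMatrix R c x i j = 0 by
    rw [Matrix.add_apply, Matrix.smul_apply, this, smul_zero, add_zero]
  by_contra h
  obtain ⟨m, rfl, rfl, -⟩ := exists_of_stepMatrix_ne_zero h
  exact absurd hji (by simp [Fin.le_def])

theorem partialProd_one_add_superdiagonal {B : Fin n → Matrix (Fin (n + 1)) (Fin (n + 1)) R}
    (hB : ∀ m i j, B m i j ≠ 0 → (j : ℕ) = i + 1) (j : Fin (n + 1)) :
    (∀ l, j < l → Fin.partialProd (fun m => 1 + B m) j 0 l = 0) ∧
      Fin.partialProd (fun m => 1 + B m) j 0 j =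
        Fin.partialProd (fun m => B m m.castSucc m.succ) j := by
  induction j using Fin.induction with
  | zero => exact ⟨fun l hl => by simp [Matrix.one_apply_ne hl.ne], by simp⟩
  | succ j ih =>
    obtain ⟨hzero, hdiag⟩ := ih
    have hzero' (i l : Fin (n + 1)) (hl : j.castSucc < l) (hi : i ≠ j.castSucc ∨ l ≠ j.succ) :
        Fin.partialProd (fun m => 1 + B m) j.castSucc 0 i * B j i l = 0 := by
      by_contra h
      have hil := hB j i l (right_ne_zero_of_mul h)
      have hij : i ≤ j.castSucc := le_of_not_gt fun hlt => left_ne_zero_of_mul h (hzero i hlt)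
      simp only [Fin.lt_def, Fin.le_def, ne_eq, Fin.ext_iff, Fin.val_castSucc, Fin.val_succ]
        at hl hij hi
      omega
    refine ⟨fun l hl => ?_, ?_⟩
    · have hjl : j.castSucc < l := j.castSucc_lt_succ.trans hl
      rw [Fin.partialProd_succ, mul_add, mul_one, Matrix.add_apply, hzero l hjl, zero_add,
        Matrix.mul_apply]
      exact Finset.sum_eq_zero fun i _ => hzero' i l hjl (.inr hl.ne')
    · rw [Fin.partialProd_succ, Fin.partialProd_succ, mul_add, mul_one, Matrix.add_apply,
        hzero _ j.castSucc_lt_succ, zero_add, Matrix.mul_apply,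
        Finset.sum_eq_single j.castSucc (fun i _ hi => hzero' i _ j.castSucc_lt_succ (.inl hi))
          (by simp), hdiag]

/-- The representation of a free group sending each letter `x` to `1 + stepMatrix R c x`. -/
noncomputable def stepRep (R : Type*) [CommRing R] (c : Fin n → α)
    (hc : ∀ m m' : Fin n, (m' : ℕ) = m + 1 → c m ≠ c m') :
    FreeGroup α →* (Matrix (Fin (n + 1)) (Fin (n + 1)) R)ˣ :=
  FreeGroup.lift fun x =>
    oneAddZSMulHom (stepMatrix R c x) (stepMatrix_mul_self hc x) (Multiplicative.ofAdd 1)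

variable {c : Fin n → α} (hc : ∀ m m' : Fin n, (m' : ℕ) = m + 1 → c m ≠ c m')

theorem val_stepRep_of_zpow (x : α) (k : ℤ) :
    (stepRep R c hc (FreeGroup.of x ^ k)).val = 1 + k • stepMatrix R c x := by
  rw [map_zpow, stepRep, FreeGroup.lift_apply_of, ← map_zpow, ← ofAdd_zsmul, smul_eq_mul, mul_one,
    val_oneAddZSMulHom]

theorem isUnitriangular_stepRep (v : FreeGroup α) : IsUnitriangular (stepRep R c hc v).val := by
  induction v using FreeGroup.induction_on with
  | C1 => simpa using IsUnitriangular.one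
  | of x =>
    have h := val_stepRep_of_zpow (R := R) hc x 1
    rw [zpow_one] at h
    exact h ▸ isUnitriangular_one_add_zsmul_stepMatrix c x 1
  | inv_of x _ =>
    have h := val_stepRep_of_zpow (R := R) hc x (-1)
    rw [zpow_neg_one] at h
    exact h ▸ isUnitriangular_one_add_zsmul_stepMatrix c x (-1)
  | mul v w hv hw => simpa using hv.mul hw

theorem stepRep_prod_syllables_apply (k : Fin n → ℤ) :
    (stepRep R c hc (List.ofFn fun m => FreeGroup.of (c m) ^ k m).prod).val 0 (Fin.last n) =
      ((∏ m, k m : ℤ) : R) := by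
  have hB (m : Fin n) (i j : Fin (n + 1)) (h : (k m • stepMatrix R c (c m)) i j ≠ 0) :
      (j : ℕ) = i + 1 := by
    obtain ⟨m', rfl, rfl, -⟩ := exists_of_stepMatrix_ne_zero (R := R) (c := c) (x := c m) (i := i)
      (j := j) fun h0 => h (by rw [Matrix.smul_apply, h0, smul_zero])
    simp
  have hval : (stepRep R c hc (List.ofFn fun m => FreeGroup.of (c m) ^ k m).prod).val =
      Fin.partialProd (fun m => 1 + k m • stepMatrix R c (c m)) (Fin.last n) := by
    rw [← Units.coeHom_apply, ← MonoidHom.comp_apply, map_list_prod, List.map_ofFn,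
      Fin.partialProd, List.take_of_length_le (by simp)]
    congr 2
    exact funext fun m => val_stepRep_of_zpow hc (c m) (k m)
  rw [hval, (partialProd_one_add_superdiagonal hB (Fin.last n)).2, Fin.partialProd,
    List.take_of_length_le (by simp), List.prod_ofFn]
  simp [stepMatrix_castSucc_succ]

end StepMatrix

theorem exists_isPGroup_map_ne_one {α : Type*} {w : FreeGroup α} (hw : w ≠ 1) {γ : ℤ}
    (hγ : γ ≠ 0) :
    ∃ p : ℕ, p.Prime ∧ ¬ (p : ℤ) ∣ γ ∧ ∃ (Q : Type) (_ : Group Q) (_ : Finite Q)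
      (f : FreeGroup α →* Q), IsPGroup p Q ∧ f w ≠ 1 := by
  obtain ⟨n, c, k, rfl, hk, hc⟩ := exists_eq_prod_syllables w
  have hn : n ≠ 0 := by
    rintro rfl
    exact hw (by simp)
  have hprod : ∏ m, k m ≠ 0 := Finset.prod_ne_zero_iff.2 fun m _ => hk m
  obtain ⟨p, hlt, hp⟩ := Nat.exists_infinite_primes (γ * ∏ m, k m).natAbs.succ
  have hdvd : ¬ (p : ℤ) ∣ γ * ∏ m, k m := fun h =>
    absurd (Nat.le_of_dvd (Int.natAbs_pos.2 (mul_ne_zero hγ hprod)) (Int.natCast_dvd.1 h))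
      (not_le.2 hlt)
  have : Fact p.Prime := ⟨hp⟩
  have : Finite (Matrix (Fin (n + 1)) (Fin (n + 1)) (ZMod p))ˣ :=
    Finite.of_injective _ Units.val_injective
  let f := stepRep (ZMod p) c hc
  refine ⟨p, hp, fun h => hdvd (h.mul_right _), f.range, inferInstance, inferInstance,
    f.rangeRestrict, isPGroup_range_of_isUnitriangular p f (isUnitriangular_stepRep hc),
    fun h => ?_⟩
  have htop := stepRep_prod_syllables_apply (R := ZMod p) hc k
  rw [show stepRep (ZMod p) c hc _ = 1 from congrArg Subtype.val h, Units.val_one,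
    Matrix.one_apply_ne (by simpa [Fin.ext_iff] using hn.symm), eq_comm,
    ZMod.intCast_zmod_eq_zero_iff_dvd] at htop
  exact hdvd (htop.mul_left _)

section EquationSolving

theorem exists_zpow_eq_of_isPGroup {p : ℕ} [hp : Fact p.Prime] {Q : Type*} [Group Q]
    (hQ : IsPGroup p Q) {k : ℤ} (hk : ¬ (p : ℤ) ∣ k) (y : Q) : ∃ z : Q, z ^ k = y := by
  have hcop : p.Coprime k.natAbs :=
    hp.out.coprime_iff_not_dvd.2 fun h => hk (Int.natCast_dvd.2 h)
  have hsurj := (hQ.powEquiv hcop).surjective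
  rcases Int.natAbs_eq k with h | h
  · obtain ⟨z, hz⟩ := hsurj y
    exact ⟨z, by rw [h, zpow_natCast]; exact hz⟩
  · obtain ⟨z, hz⟩ := hsurj y⁻¹
    exact ⟨z, by rw [h, zpow_neg, zpow_natCast, inv_eq_iff_eq_inv]; exact hz⟩

variable {α : Type*}

open scoped Classical in
/-- The exponent sum of the letter `c`. -/
noncomputable def exponentSum (c : α) : FreeGroup α →* Multiplicative ℤ :=
  FreeGroup.lift (Pi.mulSingle c (Multiplicative.ofAdd 1))

@[simp]
theorem exponentSum_of_self (c : α) :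
    exponentSum c (FreeGroup.of c) = Multiplicative.ofAdd 1 := by
  simp [exponentSum]

theorem exponentSum_of_ne {c x : α} (h : x ≠ c) : exponentSum c (FreeGroup.of x) = 1 := by
  simp [exponentSum, h]

theorem exists_hom_eq_mul_central_zpow {G Q : Type*} [Group G] [Group Q] (f : G →* Q)
    (e : G →* Multiplicative ℤ) (z : Subgroup.center Q) :
    ∃ f' : G →* Q, ∀ g, f' g = f g * (z : Q) ^ (e g).toAdd := by
  refine ⟨MonoidHom.mk' (fun g => f g * (z : Q) ^ (e g).toAdd) fun g h => ?_, fun _ => rfl⟩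
  have hz : Commute (f h) ((z : Q) ^ (e g).toAdd) :=
    Subgroup.mem_center_iff.1 (Subgroup.zpow_mem _ z.2 (e g).toAdd) (f h)
  rw [map_mul, map_mul, toAdd_mul, zpow_add, hz.mul_mul_mul_comm]

/-- Induction along the upper central series: a solution modulo the center is corrected by a root in
the center, which is a `p`-group and so has roots of every exponent prime to `p`. -/
theorem exists_hom_map_eq_one_of_not_dvd_exponentSum {p : ℕ} [Fact p.Prime] (c : α)
    (r : FreeGroup α) (hr : ¬ (p : ℤ) ∣ (exponentSum c r).toAdd) (Q : Type*) [Group Q]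
    [Group.IsNilpotent Q] (hQ : IsPGroup p Q) (f : FreeGroup α →* Q) :
    ∃ f' : FreeGroup α →* Q,
      (∀ x, x ≠ c → f' (FreeGroup.of x) = f (FreeGroup.of x)) ∧ f' r = 1 := by
  classical
  refine Group.nilpotent_center_quotient_ind
    (P := fun Q _ _ => IsPGroup p Q → ∀ f : FreeGroup α →* Q, ∃ f' : FreeGroup α →* Q,
      (∀ x, x ≠ c → f' (FreeGroup.of x) = f (FreeGroup.of x)) ∧ f' r = 1) Q ?_ ?_ hQ f
  · exact fun Q _ _ _ f => ⟨f, fun _ _ => rfl, Subsingleton.elim _ _⟩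
  · intro Q _ _ ih hQ f
    let π := QuotientGroup.mk' (Subgroup.center Q)
    obtain ⟨g, hgf, hgr⟩ := ih (hQ.to_quotient _) (π.comp f)
    obtain ⟨q, hq⟩ := QuotientGroup.mk'_surjective _ (g (FreeGroup.of c))
    let f₁ : FreeGroup α →* Q := FreeGroup.lift (Function.update (f ∘ FreeGroup.of) c q)
    have hf₁ (x : α) (hx : x ≠ c) : f₁ (FreeGroup.of x) = f (FreeGroup.of x) := by simp [f₁, hx]
    have hπ : π.comp f₁ = g := by
      ext x
      by_cases hx : x = c
      · subst hx; simpa [f₁, π] using hq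
      · exact (congrArg π (hf₁ x hx)).trans (hgf x hx).symm
    have hcentral : f₁ r ∈ Subgroup.center Q := by
      rw [← QuotientGroup.ker_mk' (Subgroup.center Q), MonoidHom.mem_ker, ← hgr, ← hπ]
      rfl
    obtain ⟨z, hz⟩ := exists_zpow_eq_of_isPGroup (hQ.to_subgroup _) hr
      (⟨f₁ r, hcentral⟩ : Subgroup.center Q)⁻¹
    obtain ⟨f', hf'⟩ := exists_hom_eq_mul_central_zpow f₁ (exponentSum c) z
    refine ⟨f', fun x hx => by simp [hf', hf₁ x hx, exponentSum_of_ne hx], ?_⟩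
    have hzr : (z : Q) ^ (exponentSum c r).toAdd = (f₁ r)⁻¹ := congrArg Subtype.val hz
    rw [hf', hzr, mul_inv_cancel]

end EquationSolving

section ConjugateInto

variable {G H : Type*} [Group G] [Group H]

/-- `r` is conjugate to an element of the subgroup `S`. -/
def IsConjInto (S : Subgroup G) (r : G) : Prop := ∃ x ∈ S, IsConj x r

theorem IsConjInto.mono {S T : Subgroup G} {r : G} (hST : S ≤ T) :
    IsConjInto S r → IsConjInto T r :=
  fun ⟨x, hx, hxr⟩ => ⟨x, hST hx, hxr⟩

theorem normalClosure_singleton_eq_of_isConj {a b : G} (h : IsConj a b) :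
    Subgroup.normalClosure {a} = Subgroup.normalClosure {b} := by
  have hle {a b : G} (h : IsConj a b) :
      Subgroup.normalClosure {b} ≤ Subgroup.normalClosure {a} := by
    obtain ⟨c, rfl⟩ := isConj_iff.1 h
    have ha : a ∈ Subgroup.normalClosure {a} := Subgroup.subset_normalClosure rfl
    exact Subgroup.normalClosure_le_normal (Set.singleton_subset_iff.2
      (Subgroup.normalClosure_normal.conj_mem a ha c))
  exact le_antisymm (hle h.symm) (hle h)

theorem map_eq_one_of_mem_normalClosure_singleton (f : G →* H) {a w : G} (ha : f a = 1)
    (hw : w ∈ Subgroup.normalClosure {a}) : f w = 1 :=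
  (Subgroup.normalClosure_le_normal (N := f.ker) (Set.singleton_subset_iff.2 ha)) hw

theorem map_eq_one_of_isConj (f : G →* H) {a b : G} (h : IsConj a b) (ha : f a = 1) : f b = 1 :=
  isConj_one_right.1 (ha ▸ f.map_isConj h)

theorem injOn_mk'_of_disjoint {S N : Subgroup G} [N.Normal] (h : Disjoint S N) :
    Set.InjOn (QuotientGroup.mk' N) S := by
  intro x hx y hy hxy
  have hN : x⁻¹ * y ∈ N := QuotientGroup.eq.1 hxy
  exact inv_mul_eq_one.1 (Subgroup.disjoint_def.1 h (S.mul_mem (S.inv_mem hx) hy) hN)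

end ConjugateInto

section Descent

variable {Λ : Type u} [Group Λ]

/-- The witness is the HNN extension of `Λ ⧸ N` that identifies the images of `S` and `σ S`. -/
theorem exists_hnnExtension_of_disjoint (N : Subgroup Λ) [N.Normal] (S : Subgroup Λ)
    (σ : Λ →* Λ) (hS : Disjoint S N) (hσS : Disjoint S (N.comap σ)) :
    ∃ (H : Type u) (_ : Group H) (j : Λ →* H) (τ : H), (∀ v, j v = 1 ↔ v ∈ N) ∧
      ∀ s ∈ S, τ⁻¹ * j s * τ = j (σ s) := by
  let q := QuotientGroup.mk' N
  let f₀ : S →* Λ ⧸ N := q.comp S.subtype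
  let f₁ : S →* Λ ⧸ N := (q.comp σ).comp S.subtype
  have hf₀ : Function.Injective f₀ := (injective_iff_map_eq_one f₀).2 fun s hs =>
    Subtype.ext (Subgroup.disjoint_def.1 hS s.2 ((QuotientGroup.eq_one_iff _).1 hs))
  have hf₁ : Function.Injective f₁ := (injective_iff_map_eq_one f₁).2 fun s hs =>
    Subtype.ext (Subgroup.disjoint_def.1 hσS s.2 ((QuotientGroup.eq_one_iff (σ s)).1 hs))
  let e₀ := MonoidHom.ofInjective hf₀
  let e₁ := MonoidHom.ofInjective hf₁
  let φ : f₁.range ≃* f₀.range := e₁.symm.trans e₀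
  refine ⟨HNNExtension (Λ ⧸ N) _ _ φ, inferInstance, HNNExtension.of.comp q, HNNExtension.t,
    fun v => ?_, fun s hs => ?_⟩
  · rw [MonoidHom.comp_apply, map_eq_one_iff _ (HNNExtension.of_injective φ)]
    exact QuotientGroup.eq_one_iff v
  · have hφ : φ.symm (e₀ ⟨s, hs⟩) = e₁ ⟨s, hs⟩ := by simp [φ]
    have hconj := HNNExtension.equiv_symm_eq_conj (φ := φ) (e₀ ⟨s, hs⟩)
    rw [hφ] at hconj
    exact hconj.symm

/-- The Freiheitssatz for the subgroup `S` and all `v ∈ C`, relative to a homomorphism `σ`: either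
`v` is conjugate into `σ S`, or `σ` embeds `S` into `Λ ⧸ ⟨⟨v⟩⟩`. -/
def FreiheitssatzOn (C : Set Λ) (S : Subgroup Λ) (σ : Λ →* Λ) : Prop :=
  ∀ v ∈ C, (∃ u ∈ C, u ∈ S ∧ IsConj (σ u) v) ∨
    Disjoint S ((Subgroup.normalClosure {v}).comap σ)

/-- Magnus' descent. Among the conjugates `ψ v` of `r` with `v ∈ C ∩ S N` choose one with `N`
minimal. By minimality `S M` and `σ (S M)`, where `N = M + 1`, both embed into `Λ ⧸ ⟨⟨v⟩⟩`; the
resulting HNN extension is a quotient of `G` in which `r` dies and `U` survives. -/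
theorem disjoint_map_normalClosure_of_descent {G : Type v} [Group G] (ψ : Λ →* G) (t : G)
    (σ : Λ →* Λ) (hψσ : ∀ v, ψ (σ v) = t⁻¹ * ψ v * t) {S : ℕ → Subgroup Λ} (hS : Monotone S)
    (hlift : ∀ (N : ℕ) (H : Type u) [Group H] (j : Λ →* H) (τ : H),
      (∀ s ∈ S N, τ⁻¹ * j s * τ = j (σ s)) → ∃ F : G →* H, ∀ u ∈ S (N + 1), F (ψ u) = j u)
    {C : Set Λ} (hC : ∀ N, FreiheitssatzOn C (S N) (MonoidHom.id Λ))
    (hCσ : ∀ N, FreiheitssatzOn C (S N) σ) {U : Subgroup Λ}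
    (hCU : FreiheitssatzOn C U (MonoidHom.id Λ)) (hU : U ≤ S 1)
    {r : G} (hr : ∃ N, ∃ v ∈ C, v ∈ S N ∧ IsConj (ψ v) r) (hr₀ : ¬IsConjInto ((S 0).map ψ) r)
    (hrU : ¬IsConjInto (U.map ψ) r) : Disjoint (U.map ψ) (Subgroup.normalClosure {r}) := by
  classical
  obtain ⟨v, hvC, hvS, hvr⟩ := Nat.find_spec hr
  have hmin : ∀ M < Nat.find hr, ∀ u ∈ C, u ∈ S M → ¬IsConj (ψ u) r := fun M hM u huC huS hur =>
    Nat.find_min hr hM ⟨u, huC, huS, hur⟩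
  generalize Nat.find hr = N at hvS hmin
  obtain _ | M := N
  · exact absurd ⟨ψ v, Subgroup.mem_map_of_mem ψ hvS, hvr⟩ hr₀
  have hU_disj : Disjoint U (Subgroup.normalClosure {v}) :=
    (hCU v hvC).resolve_left fun ⟨u, _, huU, huv⟩ =>
      hrU ⟨ψ u, Subgroup.mem_map_of_mem ψ huU, (ψ.map_isConj huv).trans hvr⟩
  have hM_disj : Disjoint (S M) (Subgroup.normalClosure {v}) :=
    (hC M v hvC).resolve_left fun ⟨u, huC, huS, huv⟩ =>
      hmin M M.lt_succ_self u huC huS ((ψ.map_isConj huv).trans hvr)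
  have hσM_disj : Disjoint (S M) ((Subgroup.normalClosure {v}).comap σ) :=
    (hCσ M v hvC).resolve_left fun ⟨u, huC, huS, huv⟩ => by
      have hψu : IsConj (ψ u) (ψ (σ u)) := isConj_iff.2 ⟨t⁻¹, by rw [hψσ, inv_inv]⟩
      exact hmin M M.lt_succ_self u huC huS ((hψu.trans (ψ.map_isConj huv)).trans hvr)
  obtain ⟨H, _, j, τ, hj, hτ⟩ := exists_hnnExtension_of_disjoint _ (S M) σ hM_disj hσM_disj
  obtain ⟨F, hF⟩ := hlift M H j τ hτ
  have hFr : F r = 1 := map_eq_one_of_isConj F hvr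
    ((hF v hvS).trans ((hj v).2 (Subgroup.subset_normalClosure rfl)))
  rw [Subgroup.disjoint_def]
  rintro _ ⟨u, hu, rfl⟩ hur
  have hju : j u = 1 :=
    (hF u (hS M.succ_pos (hU hu))).symm.trans (map_eq_one_of_mem_normalClosure_singleton F hFr hur)
  rw [Subgroup.disjoint_def.1 hU_disj hu ((hj u).1 hju), map_one]

end Descent

section LetterSubgroup

variable {α β : Type*} {s : Set α}

/-- The subgroup of a free group generated by a set of letters. -/
def letterSubgroup (s : Set α) : Subgroup (FreeGroup α) := Subgroup.closure (FreeGroup.of '' s)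

theorem of_mem_letterSubgroup {a : α} (ha : a ∈ s) : FreeGroup.of a ∈ letterSubgroup s :=
  Subgroup.subset_closure ⟨a, ha, rfl⟩

theorem letterSubgroup_mono {t : Set α} (h : s ⊆ t) : letterSubgroup s ≤ letterSubgroup t :=
  Subgroup.closure_mono (Set.image_mono h)

theorem map_letterSubgroup {G : Type*} [Group G] (f : FreeGroup α →* G) (s : Set α) :
    (letterSubgroup s).map f = Subgroup.closure ((fun a => f (FreeGroup.of a)) '' s) := by
  rw [letterSubgroup, MonoidHom.map_closure, Set.image_image]

theorem map_map_letterSubgroup (f : α → β) (s : Set α) :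
    (letterSubgroup s).map (FreeGroup.map f) = letterSubgroup (f '' s) := by
  rw [map_letterSubgroup, letterSubgroup, Set.image_image]
  simp only [FreeGroup.map.of]

theorem freeGroupMap_id : FreeGroup.map id = MonoidHom.id (FreeGroup α) :=
  MonoidHom.ext FreeGroup.map.id

theorem map_freeGroupMap_eq_lift {G : Type*} [Group G] (f : FreeGroup β →* G) (g : α → β)
    (w : FreeGroup α) :
    f (FreeGroup.map g w) = FreeGroup.lift (fun a => f (FreeGroup.of (g a))) w :=
  FreeGroup.lift_unique (f.comp (FreeGroup.map g)) fun _ => rfl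

theorem eqOn_letterSubgroup {G : Type*} [Group G] {f g : FreeGroup α →* G}
    (h : ∀ a ∈ s, f (FreeGroup.of a) = g (FreeGroup.of a)) : Set.EqOn f g (letterSubgroup s) :=
  MonoidHom.eqOn_closure (by rintro _ ⟨a, ha, rfl⟩; exact h a ha)

theorem exists_mem_letterSubgroup_of_monotone {S : ℕ → Set α} (hS : Monotone S)
    (hU : ∀ a, ∃ N, a ∈ S N) (v : FreeGroup α) : ∃ N, v ∈ letterSubgroup (S N) := by
  induction v using FreeGroup.induction_on with
  | C1 => exact ⟨0, one_mem _⟩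
  | of a => exact (hU a).imp fun _ h => of_mem_letterSubgroup h
  | inv_of a h => exact h.imp fun _ h => inv_mem h
  | mul v w hv hw =>
    obtain ⟨M, hM⟩ := hv
    obtain ⟨N, hN⟩ := hw
    exact ⟨max M N, mul_mem (letterSubgroup_mono (hS (le_max_left M N)) hM)
      (letterSubgroup_mono (hS (le_max_right M N)) hN)⟩

open scoped Classical in
/-- The retraction of a free group onto `letterSubgroup s` that kills all other letters. -/
noncomputable def letterRetraction (s : Set α) : FreeGroup α →* FreeGroup α :=
  FreeGroup.lift fun a => if a ∈ s then FreeGroup.of a else 1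

theorem letterRetraction_eq_self {v : FreeGroup α} (hv : v ∈ letterSubgroup s) :
    letterRetraction s v = v :=
  eqOn_letterSubgroup (f := letterRetraction s) (g := MonoidHom.id _)
    (fun a ha => by simp [letterRetraction, ha]) hv

theorem letterRetraction_mem (v : FreeGroup α) : letterRetraction s v ∈ letterSubgroup s := by
  suffices (letterRetraction s).range ≤ letterSubgroup s from this ⟨v, rfl⟩
  rw [letterRetraction, FreeGroup.range_lift_eq_closure, Subgroup.closure_le]
  rintro _ ⟨a, rfl⟩
  by_cases ha : a ∈ s
  · simpa [ha] using of_mem_letterSubgroup ha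
  · simp [ha]

open scoped Classical in
theorem letterRetraction_mk (L : List (α × Bool)) :
    letterRetraction s (FreeGroup.mk L) = FreeGroup.mk (L.filter fun a => a.1 ∈ s) := by
  rw [letterRetraction, FreeGroup.lift_mk]
  induction L with
  | nil => rfl
  | cons a L ih =>
    obtain ⟨x, b⟩ := a
    rw [List.map_cons, List.prod_cons, ih]
    by_cases hx : x ∈ s
    · cases b <;> simp [hx, FreeGroup.of, FreeGroup.invRev]
    · cases b <;> simp [hx]

theorem isConj_letterRetraction {v : FreeGroup α} (h : IsConjInto (letterSubgroup s) v) :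
    IsConj (letterRetraction s v) v := by
  obtain ⟨u, hu, huv⟩ := h
  have hconj := (letterRetraction s).map_isConj huv
  rw [letterRetraction_eq_self hu] at hconj
  exact hconj.symm.trans huv

variable [DecidableEq α]

theorem exists_mem_toWord_of_notMem_letterSubgroup {v : FreeGroup α} (hv : v ∉ letterSubgroup s) :
    ∃ a ∈ v.toWord, a.1 ∉ s := by
  classical
  by_contra! h
  have hfix : letterRetraction s v = v := by
    conv_lhs => rw [← FreeGroup.mk_toWord (x := v), letterRetraction_mk]
    rw [List.filter_eq_self.2 fun a ha => decide_eq_true (h a ha), FreeGroup.mk_toWord]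
  exact hv (hfix ▸ letterRetraction_mem v)

theorem norm_letterRetraction_le (v : FreeGroup α) : (letterRetraction s v).norm ≤ v.norm := by
  classical
  conv_lhs => rw [← FreeGroup.mk_toWord (x := v), letterRetraction_mk]
  exact FreeGroup.norm_mk_le.trans (List.length_filter_le _ _)

theorem norm_letterRetraction_lt {v : FreeGroup α} (hv : ∃ a ∈ v.toWord, a.1 ∉ s) :
    (letterRetraction s v).norm < v.norm := by
  classical
  conv_lhs => rw [← FreeGroup.mk_toWord (x := v), letterRetraction_mk]
  refine FreeGroup.norm_mk_le.trans_lt (List.length_filter_lt_length_iff_exists.2 ?_)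
  simpa using hv

theorem norm_map_le [DecidableEq β] (f : α → β) (v : FreeGroup α) :
    (FreeGroup.map f v).norm ≤ v.norm := by
  conv_lhs => rw [← FreeGroup.mk_toWord (x := v), FreeGroup.map.mk]
  exact FreeGroup.norm_mk_le.trans (List.length_map _).le

theorem norm_map_of_injective [DecidableEq β] {f : α → β} (hf : Function.Injective f)
    (v : FreeGroup α) : (FreeGroup.map f v).norm = v.norm := by
  rcases isEmpty_or_nonempty α with _ | _
  · simp [Subsingleton.elim v 1]
  · refine (norm_map_le f v).antisymm ?_
    obtain ⟨g, hg⟩ := hf.hasLeftInverse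
    simpa [FreeGroup.map.comp, hg.comp_eq_id] using norm_map_le g (FreeGroup.map f v)

end LetterSubgroup

section StableLetter

variable {Λ G : Type*} [Group Λ] [Group G] {ψ : Λ →* G} {t : G} {σ : Λ →* Λ}

theorem map_iterate_eq_conj (hψσ : ∀ v, ψ (σ v) = t⁻¹ * ψ v * t) (n : ℕ) (v : Λ) :
    ψ (σ^[n] v) = (t ^ n)⁻¹ * ψ v * t ^ n := by
  induction n with
  | zero => simp
  | succ n ih => rw [Function.iterate_succ_apply', hψσ, ih, pow_succ]; group

theorem exists_map_mul_zpow_mul_map_eq (hψσ : ∀ v, ψ (σ v) = t⁻¹ * ψ v * t) (m : ℤ) (u v : Λ) :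
    ∃ (k : ℤ) (i j : ℕ), ψ u * t ^ m * ψ v = t ^ k * ψ (σ^[i] u * σ^[j] v) * t ^ (m - k) := by
  rcases Int.eq_nat_or_neg m with ⟨n, rfl | rfl⟩
  · refine ⟨n, n, 0, ?_⟩
    rw [map_mul, map_iterate_eq_conj hψσ n, Function.iterate_zero_apply, zpow_natCast, sub_self,
      zpow_zero]
    group
  · refine ⟨0, 0, n, ?_⟩
    rw [map_mul, map_iterate_eq_conj hψσ n, Function.iterate_zero_apply, zpow_zero, sub_zero,
      zpow_neg, zpow_natCast]
    group

theorem exists_eq_zpow_mul_map_mul_zpow (hψσ : ∀ v, ψ (σ v) = t⁻¹ * ψ v * t)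
    (hgen : Subgroup.closure (insert t (ψ.range : Set G)) = ⊤) (g : G) :
    ∃ (k : ℤ) (v : Λ) (l : ℤ), g = t ^ k * ψ v * t ^ l := by
  have hg : g ∈ Subgroup.closure (insert t (ψ.range : Set G)) := hgen ▸ Subgroup.mem_top g
  induction hg using Subgroup.closure_induction with
  | mem g hg =>
    rcases hg with rfl | ⟨v, rfl⟩
    · exact ⟨1, 1, 0, by simp⟩
    · exact ⟨0, v, 0, by simp⟩
  | one => exact ⟨0, 1, 0, by simp⟩
  | inv g _ ih =>
    obtain ⟨k, v, l, rfl⟩ := ih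
    exact ⟨-l, v⁻¹, -k, by rw [map_inv]; group⟩
  | mul g g' _ _ ihg ihg' =>
    obtain ⟨k, u, l, rfl⟩ := ihg
    obtain ⟨k', v, l', rfl⟩ := ihg'
    obtain ⟨m, i, j, h⟩ := exists_map_mul_zpow_mul_map_eq hψσ (l + k') u v
    refine ⟨k + m, σ^[i] u * σ^[j] v, l + k' - m + l', ?_⟩
    calc t ^ k * ψ u * t ^ l * (t ^ k' * ψ v * t ^ l')
        = t ^ k * (ψ u * t ^ (l + k') * ψ v) * t ^ l' := by group
      _ = _ := by rw [h]; group

theorem isConj_map_of_eq_zpow_mul_map_mul_zpow {e : G →* Multiplicative ℤ}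
    (het : e t = Multiplicative.ofAdd 1) (heψ : ∀ v, e (ψ v) = 1) {r : G} (hr : e r = 1) {k l : ℤ}
    {v : Λ} (h : r = t ^ k * ψ v * t ^ l) : IsConj (ψ v) r := by
  have hkl : k + l = 0 := by
    simpa [h, het, heψ, ← ofAdd_zsmul, ← ofAdd_add] using hr
  obtain rfl : l = -k := by lia
  exact isConj_iff.2 ⟨t ^ k, by rw [h, zpow_neg]⟩

end StableLetter

section StablePresentation

variable {J X : Type u}

/-- The group `G` is generated by `t`, `b j` and `x i` subject to the relations
`t⁻¹ * b j * t = b j * W j`, where `W j` is a word in the `x i`. The universal property is tested on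
groups in the universe of the index types. -/
structure IsStablePresentation {G : Type v} [Group G] (t : G) (b : J → G) (x : X → G)
    (W : J → FreeGroup X) : Prop where
  rel (j : J) : t⁻¹ * b j * t = b j * FreeGroup.lift x (W j)
  closure_eq_top : Subgroup.closure (insert t (Set.range b ∪ Set.range x)) = ⊤
  exists_hom (H : Type u) [Group H] (τ : H) (β : J → H) (ξ : X → H)
    (h : ∀ j, τ⁻¹ * β j * τ = β j * FreeGroup.lift ξ (W j)) :
    ∃ F : G →* H, F t = τ ∧ (∀ j, F (b j) = β j) ∧ ∀ i, F (x i) = ξ i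

/-- The endomorphism of the free group on `J ⊕ Y` that multiplies each letter `j` of `J` by the word
`V j` in the letters of `Y`. -/
def twistHom {J Y : Type*} (V : J → FreeGroup Y) : FreeGroup (J ⊕ Y) →* FreeGroup (J ⊕ Y) :=
  FreeGroup.lift (Sum.elim (fun j => FreeGroup.of (.inl j) * FreeGroup.map .inr (V j))
    fun y => FreeGroup.of (.inr y))

theorem twistHom_of_inl {J Y : Type*} (V : J → FreeGroup Y) (j : J) :
    twistHom V (FreeGroup.of (.inl j)) = FreeGroup.of (.inl j) * FreeGroup.map .inr (V j) :=
  FreeGroup.lift_apply_of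

theorem twistHom_of_inr {J Y : Type*} (V : J → FreeGroup Y) (y : Y) :
    twistHom V (FreeGroup.of (.inr y)) = FreeGroup.of (.inr y) :=
  FreeGroup.lift_apply_of

theorem twistHom_map_inr {J Y : Type*} (V : J → FreeGroup Y) (v : FreeGroup Y) :
    twistHom V (FreeGroup.map .inr v) = FreeGroup.map .inr v := by
  suffices (twistHom V).comp (FreeGroup.map .inr) = FreeGroup.map .inr from
    DFunLike.congr_fun this v
  ext y
  simp [twistHom_of_inr]

/-- `twistHom` as an automorphism. -/
def twist {J Y : Type*} (V : J → FreeGroup Y) : FreeGroup (J ⊕ Y) ≃* FreeGroup (J ⊕ Y) :=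
  MonoidHom.toMulEquiv (twistHom V) (twistHom fun j => (V j)⁻¹)
    (by ext (j | y) <;> simp [twistHom_of_inl, twistHom_of_inr, twistHom_map_inr])
    (by ext (j | y) <;> simp [twistHom_of_inl, twistHom_of_inr, twistHom_map_inr])

/-- The letter `inr (i, n)` stands for `t⁻ⁿ * x i * tⁿ`; this map is conjugation by `t` on these
letters. -/
def shiftLetter : J ⊕ X × ℕ → J ⊕ X × ℕ := Sum.map id (Prod.map id Nat.succ)

theorem shiftLetter_injective : Function.Injective (shiftLetter (J := J) (X := X)) :=
  Function.Injective.sumMap Function.injective_id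
    (Function.Injective.prodMap Function.injective_id Nat.succ_injective)

/-- Conjugation by the stable letter `t`, on words in the letters `J ⊕ X × ℕ`. -/
def stableShift (W : J → FreeGroup X) : FreeGroup (J ⊕ X × ℕ) →* FreeGroup (J ⊕ X × ℕ) :=
  (twistHom fun j => FreeGroup.map (·, 0) (W j)).comp (FreeGroup.map shiftLetter)

theorem stableShift_of_inl (W : J → FreeGroup X) (j : J) :
    stableShift W (FreeGroup.of (.inl j)) =
      FreeGroup.of (.inl j) * FreeGroup.map (fun i => .inr (i, 0)) (W j) := by
  have h := FreeGroup.map.comp (·, 0) (Sum.inr : X × ℕ → J ⊕ X × ℕ) (W j)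
  simpa [stableShift, shiftLetter, twistHom_of_inl, Function.comp_def] using h

theorem stableShift_of_inr (W : J → FreeGroup X) (i : X) (n : ℕ) :
    stableShift W (FreeGroup.of (.inr (i, n))) = FreeGroup.of (.inr (i, n + 1)) := by
  simp [stableShift, shiftLetter, twistHom_of_inr]

/-- The letters involving only conjugates `t⁻ⁿ * x i * tⁿ` with `n < N`. -/
def lettersBelow (J X : Type u) (N : ℕ) : Set (J ⊕ X × ℕ) := {q | ∀ p, q = .inr p → p.2 < N}

theorem inl_mem_lettersBelow (j : J) (N : ℕ) : Sum.inl j ∈ lettersBelow J X N := nofun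

theorem inr_mem_lettersBelow {i : X} {n N : ℕ} : Sum.inr (i, n) ∈ lettersBelow J X N ↔ n < N := by
  simp [lettersBelow]

theorem monotone_lettersBelow : Monotone (lettersBelow J X) :=
  fun _ _ h _ hq p hp => (hq p hp).trans_le h

theorem exists_mem_lettersBelow (q : J ⊕ X × ℕ) : ∃ N, q ∈ lettersBelow J X N := by
  rcases q with j | ⟨i, n⟩
  · exact ⟨0, inl_mem_lettersBelow j 0⟩
  · exact ⟨n + 1, inr_mem_lettersBelow.2 n.lt_succ_self⟩

variable {G : Type v} [Group G]

/-- The interpretation of `inl j` as `b j` and of `inr (i, n)` as `t⁻ⁿ * x i * tⁿ`. -/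
def stableEval (t : G) (b : J → G) (x : X → G) : FreeGroup (J ⊕ X × ℕ) →* G :=
  FreeGroup.lift (Sum.elim b fun p => (t ^ p.2)⁻¹ * x p.1 * t ^ p.2)

variable {t : G} {b : J → G} {x : X → G} {W : J → FreeGroup X}

theorem stableEval_of_inl (j : J) : stableEval t b x (FreeGroup.of (.inl j)) = b j := by
  simp [stableEval]

theorem stableEval_of_inr (i : X) (n : ℕ) :
    stableEval t b x (FreeGroup.of (.inr (i, n))) = (t ^ n)⁻¹ * x i * t ^ n := by
  simp [stableEval]

theorem stableEval_map_inr_zero (v : FreeGroup X) :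
    stableEval t b x (FreeGroup.map (fun i => .inr (i, 0)) v) = FreeGroup.lift x v := by
  simp [map_freeGroupMap_eq_lift, stableEval_of_inr]

theorem map_stableEval_letterSubgroup_inr_zero (Y : Set X) :
    (letterSubgroup ((fun i => Sum.inr (i, 0)) '' Y)).map (stableEval t b x) =
      Subgroup.closure (x '' Y) := by
  simp [map_letterSubgroup, Set.image_image, stableEval_of_inr]

theorem map_stableEval_letterSubgroup_lettersBelow_zero_le :
    (letterSubgroup (lettersBelow J X 0)).map (stableEval t b x) ≤
      Subgroup.closure (Set.range b) := by
  rw [map_letterSubgroup]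
  refine Subgroup.closure_mono ?_
  rintro _ ⟨j | p, hq, rfl⟩
  · exact ⟨j, (stableEval_of_inl j).symm⟩
  · exact absurd (hq p rfl) p.2.not_lt_zero

namespace IsStablePresentation

theorem stableEval_stableShift (h : IsStablePresentation t b x W) (v : FreeGroup (J ⊕ X × ℕ)) :
    stableEval t b x (stableShift W v) = t⁻¹ * stableEval t b x v * t := by
  suffices (stableEval t b x).comp (stableShift W) =
      (MulAut.conj t⁻¹).toMonoidHom.comp (stableEval t b x) by
    simpa using DFunLike.congr_fun this v
  ext (j | ⟨i, n⟩)
  · simp [stableShift_of_inl, stableEval_map_inr_zero, stableEval_of_inl, h.rel]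
  · simp [stableShift_of_inr, stableEval_of_inr, pow_succ, mul_assoc]

theorem closure_insert_range_stableEval (h : IsStablePresentation t b x W) :
    Subgroup.closure (insert t ((stableEval t b x).range : Set G)) = ⊤ := by
  rw [← top_le_iff, ← h.closure_eq_top]
  refine Subgroup.closure_mono (Set.insert_subset_insert (Set.union_subset ?_ ?_))
  · rintro _ ⟨j, rfl⟩
    exact ⟨_, stableEval_of_inl j⟩
  · rintro _ ⟨i, rfl⟩
    exact ⟨FreeGroup.of (.inr (i, 0)), by simp [stableEval_of_inr]⟩

theorem exists_hom_eqOn (h : IsStablePresentation t b x W) (N : ℕ) {H : Type u} [Group H]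
    (f : FreeGroup (J ⊕ X × ℕ) →* H) (τ : H)
    (hτ : ∀ s ∈ letterSubgroup (lettersBelow J X N), τ⁻¹ * f s * τ = f (stableShift W s)) :
    ∃ F : G →* H, ∀ u ∈ letterSubgroup (lettersBelow J X (N + 1)),
      F (stableEval t b x u) = f u := by
  obtain ⟨F, hFt, hFb, hFx⟩ := h.exists_hom H τ (fun j => f (FreeGroup.of (.inl j)))
    (fun i => f (FreeGroup.of (.inr (i, 0)))) fun j => by
      rw [hτ _ (of_mem_letterSubgroup (inl_mem_lettersBelow j N)), stableShift_of_inl, map_mul,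
        map_freeGroupMap_eq_lift]
  have hconj (i : X) (n : ℕ) (hn : n ≤ N) :
      (τ ^ n)⁻¹ * f (FreeGroup.of (.inr (i, 0))) * τ ^ n = f (FreeGroup.of (.inr (i, n))) := by
    induction n with
    | zero => simp
    | succ n ih =>
      rw [← stableShift_of_inr W, ← hτ _ (of_mem_letterSubgroup (inr_mem_lettersBelow.2 hn)),
        ← ih (by lia), pow_succ]
      group
  refine ⟨F, eqOn_letterSubgroup (f := F.comp (stableEval t b x)) ?_⟩
  rintro (j | ⟨i, n⟩) hq
  · simp [stableEval_of_inl, hFb]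
  · simp [stableEval_of_inr, hFt, hFx, hconj i n (Nat.lt_succ_iff.1 (inr_mem_lettersBelow.1 hq))]

theorem disjoint_closure_image_normalClosure (h : IsStablePresentation t b x W)
    {C : Set (FreeGroup (J ⊕ X × ℕ))} (hC : ∀ s, FreiheitssatzOn C (letterSubgroup s) (.id _))
    (hCσ : ∀ s, FreiheitssatzOn C (letterSubgroup s) (stableShift W)) {r : G}
    (hr : ∃ v ∈ C, IsConj (stableEval t b x v) r)
    (hrb : ¬IsConjInto (Subgroup.closure (Set.range b)) r) {Y : Set X}
    (hrY : ¬IsConjInto (Subgroup.closure (x '' Y)) r) :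
    Disjoint (Subgroup.closure (x '' Y)) (Subgroup.normalClosure {r}) := by
  rw [← map_stableEval_letterSubgroup_inr_zero (t := t) (b := b)] at hrY ⊢
  obtain ⟨v, hvC, hvr⟩ := hr
  obtain ⟨N, hvN⟩ := exists_mem_letterSubgroup_of_monotone monotone_lettersBelow
    exists_mem_lettersBelow v
  refine disjoint_map_normalClosure_of_descent (S := fun N => letterSubgroup (lettersBelow J X N))
    (stableEval t b x) t (stableShift W) h.stableEval_stableShift
    (fun _ _ hMN => letterSubgroup_mono (monotone_lettersBelow hMN))
    (fun N H _ => h.exists_hom_eqOn N)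
    (fun _ => hC _) (fun _ => hCσ _) (hC _) (letterSubgroup_mono ?_) ⟨N, v, hvC, hvN, hvr⟩
    (fun hr₀ => hrb (hr₀.mono map_stableEval_letterSubgroup_lettersBelow_zero_le)) hrY
  rintro _ ⟨i, -, rfl⟩
  exact inr_mem_lettersBelow.2 Nat.one_pos

end IsStablePresentation

end StablePresentation

section Magnus

variable {α : Type u}

theorem FreiheitssatzOn.equiv_comp {Λ : Type*} [Group Λ] {S : Subgroup Λ} {σ : Λ →* Λ}
    (h : FreiheitssatzOn Set.univ S σ) (θ : Λ ≃* Λ) :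
    FreiheitssatzOn Set.univ S (θ.toMonoidHom.comp σ) := by
  intro v _
  refine (h (θ.symm v) trivial).imp ?_ fun hdisj => ?_
  · rintro ⟨u, hu, huS, huv⟩
    exact ⟨u, hu, huS, by simpa using θ.toMonoidHom.map_isConj huv⟩
  · have hv : (Subgroup.normalClosure {v}).comap θ.toMonoidHom =
        Subgroup.normalClosure {θ.symm v} := by
      rw [MulEquiv.toMonoidHom_eq_coe, ← Subgroup.comap_normalClosure, ← MulEquiv.coe_toEquiv,
        ← Equiv.image_symm_eq_preimage, Set.image_singleton]
      rfl
    rwa [← Subgroup.comap_comap, hv]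

/-- Magnus' Freiheitssatz for relators of length less than `n`: the induction hypothesis in its
proof. -/
def MagnusBelow (n : ℕ) : Prop :=
  ∀ (β : Type u) [DecidableEq β] (s : Set β) (v : FreeGroup β), v.norm < n →
    ¬IsConjInto (letterSubgroup s) v → Disjoint (letterSubgroup s) (Subgroup.normalClosure {v})

theorem MagnusBelow.freiheitssatzOn_map [DecidableEq α] {n : ℕ} (h : MagnusBelow.{u} n)
    {f : α → α} (hf : Function.Injective f) (s : Set α) :
    FreiheitssatzOn {v | v.norm < n} (letterSubgroup s) (FreeGroup.map f) := by
  intro v hv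
  by_cases hvs : IsConjInto (letterSubgroup (f '' s)) v
  · obtain ⟨u, hu, huv⟩ : letterRetraction (f '' s) v ∈ (letterSubgroup s).map (FreeGroup.map f) :=
      map_map_letterSubgroup f s ▸ letterRetraction_mem v
    have hun : u.norm ≤ v.norm := by
      rw [← norm_map_of_injective hf, huv]
      exact norm_letterRetraction_le v
    exact .inl ⟨u, hun.trans_lt hv, hu, huv ▸ isConj_letterRetraction hvs⟩
  · refine .inr (Subgroup.disjoint_def.2 fun {u} hu huv => ?_)
    have hfu : FreeGroup.map f u ∈ letterSubgroup (f '' s) :=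
      map_map_letterSubgroup f s ▸ Subgroup.mem_map_of_mem _ hu
    exact (map_eq_one_iff _ (FreeGroup.map_injective hf)).1
      (Subgroup.disjoint_def.1 (h α _ v hv hvs) hfu huv)

theorem MagnusBelow.freiheitssatzOn_id [DecidableEq α] {n : ℕ} (h : MagnusBelow.{u} n)
    (s : Set α) : FreiheitssatzOn {v | v.norm < n} (letterSubgroup s) (.id _) :=
  freeGroupMap_id ▸ h.freiheitssatzOn_map Function.injective_id s

theorem isStablePresentation_freeGroup (c : α) :
    IsStablePresentation (FreeGroup.of c) (PEmpty.elim.{u + 1, u + 1})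
      (fun a : {a // a ≠ c} => FreeGroup.of a.1) PEmpty.elim where
  rel := nofun
  closure_eq_top := by
    rw [← top_le_iff, ← FreeGroup.closure_range_of]
    refine Subgroup.closure_mono ?_
    rintro _ ⟨a, rfl⟩
    by_cases ha : a = c
    · exact .inl (congrArg _ ha)
    · exact .inr (.inr ⟨⟨a, ha⟩, rfl⟩)
  exists_hom H _ τ _ ξ _ := by
    classical
    exact ⟨FreeGroup.lift fun a => if ha : a = c then τ else ξ ⟨a, ha⟩, by simp, nofun,
      fun a => by simp [a.2]⟩

theorem stableShift_of_isEmpty {J X : Type u} [IsEmpty J] (W : J → FreeGroup X) :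
    stableShift W = FreeGroup.map shiftLetter := by
  ext (j | ⟨i, n⟩)
  · exact isEmptyElim j
  · simp [stableShift_of_inr, shiftLetter]

theorem norm_iterate_stableShift_of_isEmpty {J X : Type u} [IsEmpty J] [DecidableEq J]
    [DecidableEq X] (W : J → FreeGroup X) (n : ℕ) (v : FreeGroup (J ⊕ X × ℕ)) :
    ((stableShift W)^[n] v).norm = v.norm := by
  induction n with
  | zero => rfl
  | succ n ih =>
    rw [Function.iterate_succ_apply', stableShift_of_isEmpty,
      norm_map_of_injective shiftLetter_injective, ← stableShift_of_isEmpty W, ih]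

/-- The interpretation `stableEval` for the free group, with one of its letters `c` as the stable
letter. -/
def letterEval (c : α) : FreeGroup (PEmpty.{u + 1} ⊕ {a // a ≠ c} × ℕ) →* FreeGroup α :=
  stableEval (FreeGroup.of c) PEmpty.elim fun a => FreeGroup.of a.1

theorem letterEval_mk_singleton {c : α} (a : {a // a ≠ c}) (b : Bool) :
    letterEval c (FreeGroup.mk [(.inr (a, 0), b)]) = FreeGroup.mk [(a.1, b)] := by
  cases b <;> simp [letterEval, stableEval, FreeGroup.of, FreeGroup.invRev]

theorem exponentSum_letterEval (c : α) (v : FreeGroup (PEmpty.{u + 1} ⊕ {a // a ≠ c} × ℕ)) :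
    exponentSum c (letterEval c v) = 1 := by
  suffices (exponentSum c).comp (letterEval c) = 1 from DFunLike.congr_fun this v
  ext (j | ⟨a, n⟩)
  · exact j.elim
  · simp [letterEval, stableEval_of_inr, exponentSum_of_ne a.2]

theorem exists_mk_eq_zpow_mul_letterEval_mul_zpow [DecidableEq α] (c : α) (L : List (α × Bool)) :
    ∃ (k : ℤ) (v : FreeGroup (PEmpty.{u + 1} ⊕ {a // a ≠ c} × ℕ)) (l : ℤ),
      FreeGroup.mk L = FreeGroup.of c ^ k * letterEval c v * FreeGroup.of c ^ l ∧
      v.norm ≤ (L.filter fun a => a.1 ≠ c).length := by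
  induction L with
  | nil => exact ⟨0, 1, 0, by simp [← FreeGroup.one_eq_mk], by simp⟩
  | cons a L ih =>
    obtain ⟨x, b⟩ := a
    obtain ⟨k, v, l, hL, hv⟩ := ih
    have hcons : FreeGroup.mk ((x, b) :: L) = FreeGroup.mk [(x, b)] * FreeGroup.mk L := rfl
    rw [hcons, hL]
    by_cases hx : x = c
    · obtain ⟨m, hm⟩ : ∃ m : ℤ, FreeGroup.mk [(x, b)] = FreeGroup.of c ^ m := by
        subst hx
        cases b
        · exact ⟨-1, by simp [FreeGroup.of, FreeGroup.invRev]⟩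
        · exact ⟨1, by simp [FreeGroup.of]⟩
      refine ⟨m + k, v, l, ?_, by simpa [hx] using hv⟩
      rw [hm]
      group
    · let u : FreeGroup (PEmpty.{u + 1} ⊕ {a // a ≠ c} × ℕ) :=
        FreeGroup.mk [(.inr (⟨x, hx⟩, 0), b)]
      obtain ⟨m, i, j, h⟩ := exists_map_mul_zpow_mul_map_eq (ψ := letterEval c)
        (isStablePresentation_freeGroup c).stableEval_stableShift k u v
      refine ⟨m, (stableShift PEmpty.elim)^[i] u * (stableShift PEmpty.elim)^[j] v, k - m + l,
        ?_, ?_⟩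
      · rw [← letterEval_mk_singleton ⟨x, hx⟩, ← mul_assoc, ← mul_assoc, h]
        group
      · have hu1 : u.norm ≤ 1 := FreeGroup.norm_mk_le
        calc _ ≤ _ := FreeGroup.norm_mul_le _ _
          _ = u.norm + v.norm := by simp only [norm_iterate_stableShift_of_isEmpty]
          _ ≤ 1 + (L.filter fun a => a.1 ≠ c).length := add_le_add hu1 hv
          _ = _ := by simp [hx, add_comm]

theorem disjoint_letterSubgroup_compl_singleton_of_exponentSum_eq_one [DecidableEq α] (c : α)
    (r : FreeGroup α) (hn : MagnusBelow.{u} r.norm) (hrc : exponentSum c r = 1)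
    (hr : ¬IsConjInto (letterSubgroup {c}ᶜ) r) :
    Disjoint (letterSubgroup {c}ᶜ) (Subgroup.normalClosure {r}) := by
  obtain ⟨a, har, hac⟩ := exists_mem_toWord_of_notMem_letterSubgroup
    fun hmem => hr ⟨r, hmem, IsConj.refl r⟩
  obtain ⟨k, v, l, hkl, hv⟩ := exists_mk_eq_zpow_mul_letterEval_mul_zpow c r.toWord
  rw [FreeGroup.mk_toWord] at hkl
  have hvr : v.norm < r.norm := hv.trans_lt
    (List.length_filter_lt_length_iff_exists.2 ⟨a, har, by simpa using hac⟩)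
  have hconj : IsConj (letterEval c v) r := isConj_map_of_eq_zpow_mul_map_mul_zpow
    (exponentSum_of_self c) (exponentSum_letterEval c) hrc hkl
  have himage : letterSubgroup {c}ᶜ =
      Subgroup.closure ((fun a : {a // a ≠ c} => FreeGroup.of a.1) '' Set.univ) := by
    rw [letterSubgroup, Set.image_univ, Set.image_eq_range]
    rfl
  rw [himage] at hr ⊢
  refine (isStablePresentation_freeGroup c).disjoint_closure_image_normalClosure
    hn.freiheitssatzOn_id (fun s => ?_) ⟨v, hvr, hconj⟩
    (fun h => hr (h.mono (Subgroup.closure_mono ?_))) hr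
  · rw [stableShift_of_isEmpty]
    exact hn.freiheitssatzOn_map shiftLetter_injective s
  · rw [Set.range_eq_empty]
    exact Set.empty_subset _

/-- If the exponent sum of `c` is nonzero, an element of `letterSubgroup {c}ᶜ` surviving in a finite
`p`-group survives modulo `r`, since `r = 1` can be solved for `c` there. -/
theorem disjoint_letterSubgroup_compl_singleton_of_exponentSum_ne_one (c : α) (r : FreeGroup α)
    (hrc : exponentSum c r ≠ 1) :
    Disjoint (letterSubgroup {c}ᶜ) (Subgroup.normalClosure {r}) := by
  refine Subgroup.disjoint_def.2 fun {w} hw hwr => ?_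
  by_contra hw1
  obtain ⟨p, hp, hpr, Q, _, _, f, hQ, hfw⟩ :=
    exists_isPGroup_map_ne_one hw1 (γ := (exponentSum c r).toAdd) (by simpa using hrc)
  have : Fact p.Prime := ⟨hp⟩
  have : Group.IsNilpotent Q := hQ.isNilpotent
  obtain ⟨f', hff', hf'r⟩ := exists_hom_map_eq_one_of_not_dvd_exponentSum c r hpr Q hQ f
  refine hfw ?_
  rw [← eqOn_letterSubgroup hff' hw, map_eq_one_of_mem_normalClosure_singleton f' hf'r hwr]

theorem magnusBelow (n : ℕ) : MagnusBelow.{u} n := by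
  induction n with
  | zero => exact fun _ _ _ _ hv => absurd hv (Nat.not_lt_zero _)
  | succ n ih =>
    intro β _ s r hrn hrs
    obtain ⟨v, hvr, hmin⟩ : ∃ v, IsConj v r ∧ ∀ u, IsConj u r → v.norm ≤ u.norm := by
      obtain ⟨v, hvr, hmin⟩ :=
        (measure FreeGroup.norm).wf.has_min {v | IsConj v r} ⟨r, IsConj.refl r⟩
      exact ⟨v, hvr, fun u hur => Nat.not_lt.1 (hmin u hur)⟩
    obtain ⟨⟨c, b⟩, hcv, hcs⟩ :=
      exists_mem_toWord_of_notMem_letterSubgroup fun hv => hrs ⟨v, hv, hvr⟩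
    have hvc : ¬IsConjInto (letterSubgroup {c}ᶜ) v := fun h =>
      (norm_letterRetraction_lt ⟨(c, b), hcv, by simp⟩).not_ge
        (hmin _ ((isConj_letterRetraction h).trans hvr))
    have hvn : MagnusBelow.{u} v.norm := fun β _ s u hu =>
      ih β s u (hu.trans_le ((hmin r (.refl r)).trans (Nat.le_of_lt_succ hrn)))
    rw [← normalClosure_singleton_eq_of_isConj hvr]
    refine Disjoint.mono_left
      (letterSubgroup_mono (Set.subset_compl_singleton_iff.2 hcs)) ?_
    by_cases hc : exponentSum c v = 1
    · exact disjoint_letterSubgroup_compl_singleton_of_exponentSum_eq_one c v hvn hc hvc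
    · exact disjoint_letterSubgroup_compl_singleton_of_exponentSum_ne_one c v hc

theorem freiheitssatzOn_univ_map {f : α → α} (hf : Function.Injective f) (s : Set α) :
    FreiheitssatzOn Set.univ (letterSubgroup s) (FreeGroup.map f) := by
  classical
  intro v _
  refine ((magnusBelow _).freiheitssatzOn_map hf s v (Nat.lt_succ_self v.norm)).imp_left ?_
  exact fun ⟨u, _, hu⟩ => ⟨u, trivial, hu⟩

theorem freiheitssatzOn_univ_id (s : Set α) :
    FreiheitssatzOn Set.univ (letterSubgroup s) (.id _) :=
  freeGroupMap_id ▸ freiheitssatzOn_univ_map Function.injective_id s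

end Magnus

section Handle

theorem freiheitssatzOn_univ_stableShift {J X : Type u} (W : J → FreeGroup X)
    (s : Set (J ⊕ X × ℕ)) :
    FreiheitssatzOn Set.univ (letterSubgroup s) (stableShift W) :=
  (freiheitssatzOn_univ_map shiftLetter_injective s).equiv_comp (twist _)

theorem IsStablePresentation.disjoint_of_map_eq_one {J X : Type u} {G : Type v} [Group G] {t : G}
    {b : J → G} {x : X → G} {W : J → FreeGroup X} (h : IsStablePresentation t b x W)
    (e : G →* Multiplicative ℤ) (het : e t = Multiplicative.ofAdd 1) (heb : ∀ j, e (b j) = 1)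
    (hex : ∀ i, e (x i) = 1) {r : G} (her : e r = 1)
    (hrb : ¬IsConjInto (Subgroup.closure (Set.range b)) r) {Y : Set X}
    (hrY : ¬IsConjInto (Subgroup.closure (x '' Y)) r) :
    Disjoint (Subgroup.closure (x '' Y)) (Subgroup.normalClosure {r}) := by
  have heval : e.comp (stableEval t b x) = 1 := by
    ext (j | ⟨i, n⟩)
    · simp [stableEval_of_inl, heb]
    · simp [stableEval_of_inr, hex]
  obtain ⟨k, v, l, hr⟩ := exists_eq_zpow_mul_map_mul_zpow h.stableEval_stableShift
    h.closure_insert_range_stableEval r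
  exact h.disjoint_closure_image_normalClosure freiheitssatzOn_univ_id
    (freiheitssatzOn_univ_stableShift W)
    ⟨v, trivial, isConj_map_of_eq_zpow_mul_map_mul_zpow het (DFunLike.congr_fun heval) her hr⟩
    hrb hrY

variable {X : Type u} {G : Type v} [Group G] {t b : G} {x : X → G}

/-- `G` is generated by `t`, `b` and the `x i`, subject to the relation `t⁻¹ * b * t = b * W`. -/
abbrev IsHandlePresentation (t b : G) (x : X → G) (W : FreeGroup X) : Prop :=
  IsStablePresentation t (fun _ : PUnit.{u + 1} => b) x fun _ => W

namespace IsHandlePresentation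

variable {W : FreeGroup X}

theorem zpow_mul_left (h : IsHandlePresentation t b x W) (k : ℤ) :
    IsHandlePresentation (b ^ k * t) b x W where
  rel j := by
    rw [← h.rel j]
    group
  closure_eq_top := by
    rw [← top_le_iff, ← h.closure_eq_top, Set.range_const, Set.singleton_union]
    set S := Subgroup.closure (insert (b ^ k * t) (insert b (Set.range x)))
    have hb : b ∈ S := Subgroup.subset_closure (.inr (.inl rfl))
    have hbt : b ^ k * t ∈ S := Subgroup.subset_closure (.inl rfl)
    rw [Subgroup.closure_le]
    rintro y (rfl | rfl | hy)
    · exact (Subgroup.mul_mem_cancel_left S (zpow_mem hb k)).1 hbt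
    · exact hb
    · exact Subgroup.subset_closure (.inr (.inr hy))
  exists_hom H _ τ β ξ hrel := by
    obtain ⟨F, hFt, hFb, hFx⟩ := h.exists_hom H ((β ⟨⟩ ^ k)⁻¹ * τ) β ξ fun j => by
      rw [← hrel j]
      group
    exact ⟨F, by simp [hFt, hFb ⟨⟩], hFb, hFx⟩

theorem zpow_mul_right (h : IsHandlePresentation t b x W) (k : ℤ) :
    IsHandlePresentation t (t ^ k * b) x W where
  rel j := by
    rw [mul_assoc (t ^ k), ← h.rel j]
    group
  closure_eq_top := by
    rw [← top_le_iff, ← h.closure_eq_top, Set.range_const, Set.range_const, Set.singleton_union,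
      Set.singleton_union]
    set S := Subgroup.closure (insert t (insert (t ^ k * b) (Set.range x)))
    have ht : t ∈ S := Subgroup.subset_closure (.inl rfl)
    have htb : t ^ k * b ∈ S := Subgroup.subset_closure (.inr (.inl rfl))
    rw [Subgroup.closure_le]
    rintro y (rfl | rfl | hy)
    · exact ht
    · exact (Subgroup.mul_mem_cancel_left S (zpow_mem ht k)).1 htb
    · exact Subgroup.subset_closure (.inr (.inr hy))
  exists_hom H _ τ β ξ hrel := by
    obtain ⟨F, hFt, hFb, hFx⟩ := h.exists_hom H τ (fun j => (τ ^ k)⁻¹ * β j) ξ fun j => by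
      rw [mul_assoc (τ ^ k)⁻¹, ← hrel j]
      group
    exact ⟨F, hFt, fun j => by simp [hFt, hFb j], hFx⟩

end IsHandlePresentation

theorem closure_pair_zpow_mul_left_le (k : ℤ) :
    Subgroup.closure {b ^ k * t, b} ≤ Subgroup.closure {t, b} := by
  have ht : t ∈ Subgroup.closure {t, b} := Subgroup.subset_closure (.inl rfl)
  have hb : b ∈ Subgroup.closure {t, b} := Subgroup.subset_closure (.inr rfl)
  rw [Subgroup.closure_le]
  rintro y (rfl | rfl)
  · exact mul_mem (zpow_mem hb k) ht
  · exact hb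

theorem closure_pair_zpow_mul_right_le (k : ℤ) :
    Subgroup.closure {t, t ^ k * b} ≤ Subgroup.closure {t, b} := by
  rw [Set.pair_comm, Set.pair_comm t b]
  exact closure_pair_zpow_mul_left_le k

/-- There is a homomorphism `G → ℤ²` that maps `t`, `b` to the standard basis, every `x i` to zero
and `r` to `(p, q)`. -/
def HasHandleExponents (t b : G) (x : X → G) (r : G) (p q : ℤ) : Prop :=
  ∃ e : G →* Multiplicative (ℤ × ℤ), e t = Multiplicative.ofAdd (1, 0) ∧
    e b = Multiplicative.ofAdd (0, 1) ∧ (∀ i, e (x i) = 1) ∧ e r = Multiplicative.ofAdd (p, q)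

namespace HasHandleExponents

variable {r : G} {p q : ℤ}

theorem zpow_mul_left (h : HasHandleExponents t b x r p q) (k : ℤ) :
    HasHandleExponents (b ^ k * t) b x r p (q - k * p) := by
  obtain ⟨e, het, heb, hex, her⟩ := h
  let A : ℤ × ℤ →+ ℤ × ℤ := (AddMonoidHom.fst ℤ ℤ).prod (.snd ℤ ℤ - k • .fst ℤ ℤ)
  refine ⟨(AddMonoidHom.toMultiplicative A).comp e, ?_, ?_, fun i => ?_, ?_⟩
  · simp [A, het, heb, ← ofAdd_zsmul, ← ofAdd_add]
  · simp [A, heb]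
  · simp [A, hex]
  · simp [A, her]

theorem zpow_mul_right (h : HasHandleExponents t b x r p q) (k : ℤ) :
    HasHandleExponents t (t ^ k * b) x r (p - k * q) q := by
  obtain ⟨e, het, heb, hex, her⟩ := h
  let A : ℤ × ℤ →+ ℤ × ℤ := (AddMonoidHom.fst ℤ ℤ - k • .snd ℤ ℤ).prod (.snd ℤ ℤ)
  refine ⟨(AddMonoidHom.toMultiplicative A).comp e, ?_, ?_, fun i => ?_, ?_⟩
  · simp [A, het]
  · simp [A, het, heb, ← ofAdd_zsmul, ← ofAdd_add]
  · simp [A, hex]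
  · simp [A, her]

end HasHandleExponents

theorem int_pair_euclid_induction {P : ℤ → ℤ → Prop} (zero : ∀ q, P 0 q)
    (left : ∀ p q k, P p (q - k * p) → P p q) (right : ∀ p q k, P (p - k * q) q → P p q)
    (p q : ℤ) : P p q := by
  refine (EuclideanDomain.GCD.induction (P := fun p q => P p q ∧ P q p) p q (fun q => ?_)
    fun p q _ ih => ?_).1
  · exact ⟨zero q, left q 0 (-1) (right _ _ 1 (by simpa using zero q))⟩
  · have hmod : q % p = q - q / p * p := by rw [Int.emod_def, mul_comm]
    rw [hmod] at ih
    exact ⟨left p q _ ih.2, right q p _ ih.1⟩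

namespace IsHandlePresentation

variable {W : FreeGroup X}

theorem exists_hasHandleExponents (h : IsHandlePresentation t b x W) (r : G) :
    ∃ p q, HasHandleExponents t b x r p q := by
  have hlift : FreeGroup.lift (fun _ : X => (1 : ULift.{u} (Multiplicative (ℤ × ℤ)))) = 1 :=
    FreeGroup.ext_hom _ _ fun _ => FreeGroup.lift_apply_of
  have hW := DFunLike.congr_fun hlift W
  obtain ⟨e, het, heb, hex⟩ := h.exists_hom (ULift (Multiplicative (ℤ × ℤ)))
    ⟨Multiplicative.ofAdd (1, 0)⟩ (fun _ => ⟨Multiplicative.ofAdd (0, 1)⟩) (fun _ => 1)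
    fun _ => by rw [hW, mul_right_comm, inv_mul_cancel, one_mul, MonoidHom.one_apply, mul_one]
  exact ⟨_, _, MulEquiv.ulift.toMonoidHom.comp e, by rw [MonoidHom.comp_apply, het]; rfl,
    by rw [MonoidHom.comp_apply, heb ⟨⟩]; rfl, fun i => by rw [MonoidHom.comp_apply, hex]; rfl, rfl⟩

theorem disjoint_closure_image_normalClosure (h : IsHandlePresentation t b x W) {r : G}
    (hr : ¬IsConjInto (Subgroup.closure {t, b}) r) {Y : Set X}
    (hrY : ¬IsConjInto (Subgroup.closure (x '' Y)) r) :
    Disjoint (Subgroup.closure (x '' Y)) (Subgroup.normalClosure {r}) := by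
  suffices ∀ p q : ℤ, ∀ t b : G, IsHandlePresentation t b x W →
      ¬IsConjInto (Subgroup.closure {t, b}) r → HasHandleExponents t b x r p q →
      Disjoint (Subgroup.closure (x '' Y)) (Subgroup.normalClosure {r}) by
    obtain ⟨p, q, hpq⟩ := h.exists_hasHandleExponents r
    exact this p q t b h hr hpq
  refine int_pair_euclid_induction (fun q t b h hr hpq => ?_)
    (fun p q k ih t b h hr hpq => ?_) (fun p q k ih t b h hr hpq => ?_)
  · obtain ⟨e, het, heb, hex, her⟩ := hpq
    let e₁ := (AddMonoidHom.toMultiplicative (AddMonoidHom.fst ℤ ℤ)).comp e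
    exact h.disjoint_of_map_eq_one e₁ (by simp [e₁, het]) (by simp [e₁, heb])
      (by simp [e₁, hex]) (by simp [e₁, her])
      (fun hrb => hr (hrb.mono (Subgroup.closure_mono (by simp)))) hrY
  · exact ih _ b (h.zpow_mul_left k) (fun hrb => hr (hrb.mono (closure_pair_zpow_mul_left_le k)))
      (hpq.zpow_mul_left k)
  · exact ih t _ (h.zpow_mul_right k) (fun hrb => hr (hrb.mono (closure_pair_zpow_mul_right_le k)))
      (hpq.zpow_mul_right k)

end IsHandlePresentation

end Handle

section Surface

theorem isHandlePresentation_presentedGroup {α : Type u} {t b : α} (htb : t ≠ b)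
    (W : FreeGroup {a // a ≠ t ∧ a ≠ b}) {R : FreeGroup α}
    (hR : IsConj R ((.of t)⁻¹ * (.of b)⁻¹ * .of t * .of b * FreeGroup.map Subtype.val W)) :
    IsHandlePresentation (PresentedGroup.of t : PresentedGroup {R}) (PresentedGroup.of b)
      (fun a : {a // a ≠ t ∧ a ≠ b} => PresentedGroup.of a.1) W where
  rel _ := by
    have hrel := map_eq_one_of_isConj (PresentedGroup.mk {R}) hR (PresentedGroup.one_of_mem rfl)
    simp only [map_mul, map_inv, map_freeGroupMap_eq_lift] at hrel
    rw [← inv_mul_eq_one, ← hrel]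
    simp only [PresentedGroup.of]
    group
  closure_eq_top := by
    rw [← top_le_iff, ← PresentedGroup.closure_range_of]
    refine Subgroup.closure_mono ?_
    rintro _ ⟨a, rfl⟩
    by_cases hat : a = t
    · exact .inl (congrArg _ hat)
    · by_cases hab : a = b
      · exact .inr (.inl ⟨⟨⟩, congrArg _ hab.symm⟩)
      · exact .inr (.inr ⟨⟨a, hat, hab⟩, rfl⟩)
  exists_hom H _ τ β ξ hrel := by
    classical
    let f (a : α) : H := if h : a ≠ t ∧ a ≠ b then ξ ⟨a, h⟩ else if a = t then τ else β ⟨⟩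
    have ht : f t = τ := by simp [f]
    have hb : f b = β ⟨⟩ := by simp [f, htb.symm]
    have hx (a : {a // a ≠ t ∧ a ≠ b}) : f a.1 = ξ a := by simp [f, a.2]
    have hfR : FreeGroup.lift f R = 1 := by
      refine map_eq_one_of_isConj (FreeGroup.lift f) hR.symm ?_
      simp only [map_mul, map_inv, map_freeGroupMap_eq_lift, FreeGroup.lift_apply_of, ht, hb, hx]
      rw [mul_assoc, ← hrel ⟨⟩]
      group
    exact ⟨PresentedGroup.toGroup (f := f) (by simpa using hfR), by simp [ht], by simp [hb],
      by simp [hx]⟩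

theorem exists_isConj_surfaceRel {g : ℕ} (k : Fin g) :
    ∃ W : FreeGroup {p : Fin g × Bool // p ≠ (k, false) ∧ p ≠ (k, true)},
      IsConj (surfaceRel g) ((.of (k, false))⁻¹ * (.of (k, true))⁻¹ * .of (k, false) *
        .of (k, true) * FreeGroup.map Subtype.val W) := by
  let c (i : Fin g) : FreeGroup (Fin g × Bool) :=
    (.of (i, false))⁻¹ * (.of (i, true))⁻¹ * .of (i, false) * .of (i, true)
  let φ : FreeGroup {p : Fin g × Bool // p ≠ (k, false) ∧ p ≠ (k, true)} →*
    FreeGroup (Fin g × Bool) := FreeGroup.map Subtype.val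
  have hc {l : List (Fin g)} (hl : k ∉ l) : (l.map c).prod ∈ φ.range := by
    refine Subgroup.list_prod_mem _ (List.forall_mem_map.2 fun i hi => ?_)
    have hik : i ≠ k := fun h => hl (h ▸ hi)
    have hof (β : Bool) : FreeGroup.of (i, β) ∈ φ.range :=
      ⟨FreeGroup.of ⟨(i, β), by simp [hik]⟩, FreeGroup.map.of⟩
    exact mul_mem (mul_mem (mul_mem (inv_mem (hof _)) (inv_mem (hof _))) (hof _)) (hof _)
  obtain ⟨l₁, l₂, hl⟩ := List.append_of_mem (List.mem_finRange k)
  have hnodup := hl ▸ List.nodup_finRange g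
  obtain ⟨hk, -⟩ := List.nodup_middle.1 hnodup |> List.nodup_cons.1
  rw [List.mem_append, not_or] at hk
  obtain ⟨W, hW⟩ := mul_mem (hc hk.2) (hc hk.1)
  refine ⟨W, ?_⟩
  rw [show FreeGroup.map Subtype.val W = _ from hW, surfaceRel, List.ofFn_eq_map, hl,
    List.map_append, List.map_cons, List.prod_append, List.prod_cons]
  exact isConj_iff.2 ⟨(l₁.map c).prod⁻¹, by simp [c, mul_assoc]⟩

theorem surface_group_freiheitssatz_general {g : ℕ} (k : Fin g)
    (S : Set (PresentedGroup {surfaceRel g})) (hS : S ⊆ PresentedGroup.of '' {p | p.1 ≠ k})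
    (r : PresentedGroup {surfaceRel g})
    (hrk : ¬IsConjInto (Subgroup.closure {y | ∃ b, y = PresentedGroup.of (k, b)}) r)
    (hrS : ¬IsConjInto (Subgroup.closure S) r) :
    Set.InjOn (QuotientGroup.mk' (Subgroup.normalClosure {r})) (Subgroup.closure S) := by
  obtain ⟨W, hW⟩ := exists_isConj_surfaceRel k
  have hpres := isHandlePresentation_presentedGroup (by simp) W hW
  let x (p : {p : Fin g × Bool // p ≠ (k, false) ∧ p ≠ (k, true)}) :
      PresentedGroup {surfaceRel g} := PresentedGroup.of p.1
  have hSx : x '' (x ⁻¹' S) = S := by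
    refine Set.image_preimage_eq_of_subset (hS.trans ?_)
    rintro _ ⟨p, hp, rfl⟩
    exact ⟨⟨p, by rintro rfl; exact hp rfl, by rintro rfl; exact hp rfl⟩, rfl⟩
  rw [← hSx] at hrS ⊢
  refine injOn_mk'_of_disjoint (hpres.disjoint_closure_image_normalClosure (fun h => hrk ?_) hrS)
  refine h.mono (Subgroup.closure_mono ?_)
  rintro _ (rfl | rfl)
  exacts [⟨false, rfl⟩, ⟨true, rfl⟩]

end Surface

/-- The Freiheitssatz instance for closed orientable surface groups of genus `g ≥ 2`:
if `r ∈ π₁(Σ_g)` is not conjugate into `A = ⟨a₁,b₁⟩` nor into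
`B = ⟨a₂,b₂,…,a_g,b_g⟩`, then `A` and `B` embed canonically into `π₁(Σ_g)/⟨⟨r⟩⟩`. -/
theorem surface_group_freiheitssatz (g : ℕ) (hg : 2 ≤ g)
    (r : PresentedGroup ({surfaceRel g} : Set (FreeGroup (Fin g × Bool))))
    (hrA : ¬ ∃ x ∈ Subgroup.closure
        {y : PresentedGroup ({surfaceRel g} : Set (FreeGroup (Fin g × Bool))) |
          ∃ b : Bool, y = PresentedGroup.of ((⟨0, by omega⟩ : Fin g), b)},
        IsConj x r)
    (hrB : ¬ ∃ x ∈ Subgroup.closure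
        {y : PresentedGroup ({surfaceRel g} : Set (FreeGroup (Fin g × Bool))) |
          ∃ (i : Fin g) (b : Bool), (i : ℕ) ≠ 0 ∧ y = PresentedGroup.of (i, b)},
        IsConj x r) :
    Set.InjOn (QuotientGroup.mk' (Subgroup.normalClosure {r}))
      (Subgroup.closure
        {y : PresentedGroup ({surfaceRel g} : Set (FreeGroup (Fin g × Bool))) |
          ∃ b : Bool, y = PresentedGroup.of ((⟨0, by omega⟩ : Fin g), b)}) ∧
    Set.InjOn (QuotientGroup.mk' (Subgroup.normalClosure {r}))
      (Subgroup.closure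
        {y : PresentedGroup ({surfaceRel g} : Set (FreeGroup (Fin g × Bool))) |
          ∃ (i : Fin g) (b : Bool), (i : ℕ) ≠ 0 ∧ y = PresentedGroup.of (i, b)}) := by
  constructor
  · refine surface_group_freiheitssatz_general ⟨g - 1, by lia⟩ _ ?_ r
      (fun hr => hrB (hr.mono (Subgroup.closure_mono ?_))) hrA
    · rintro _ ⟨b, rfl⟩
      exact ⟨_, by simp [Fin.ext_iff]; lia, rfl⟩
    · rintro _ ⟨b, rfl⟩
      exact ⟨_, b, by simp; lia, rfl⟩
  · refine surface_group_freiheitssatz_general ⟨0, by lia⟩ _ ?_ r hrA hrB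
    rintro _ ⟨i, b, hi, rfl⟩
    exact ⟨(i, b), fun h => hi (congrArg Fin.val h), rfl⟩
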